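/- Let f : ℝ² → ℝ be of class C² satisfying (i) D²f(p)(q,q) > 0 for all p, q ∈ ℝ² with q ≠ 0, and (ii) there is a constant λ > 0 with D²f(p)(q,q) ≤ λ · (ln(2+|p|)/(1+|p|)) · |q|² for all p, q ∈ ℝ². Let u ∈ C²(ℝ²) be an entire solution of the equation div[Df(∇u)] = 0 on ℝ². If there exist constants 0 ≤ m < 1 and K > 0 such that |∂₁u(x)| ≤ K(|∂₂u(x)|^m + 1) for all x ∈ ℝ², then u is an affine function, i.e. there exist a, b, c ∈ ℝ with u(x₁,x₂) = a x₁ + b x₂ + c. -/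

import Mathlib

open Real MeasureTheory Metric
open scoped ENNReal

noncomputable section

/-- `ℝ²` with its Euclidean structure. -/
abbrev E2 : Type := EuclideanSpace ℝ (Fin 2)

/-- The `i`-th standard basis vector of `ℝ²`. -/
def ee (i : Fin 2) : E2 := EuclideanSpace.single i 1

/-- The Hessian bilinear form `D²f(p)(q,q)`. -/
def Hess (f : E2 → ℝ) (p q : E2) : ℝ := iteratedFDeriv ℝ 2 f p ![q, q]

/-- The partial derivative `∂ᵢu(x)`. -/
def pd (u : E2 → ℝ) (i : Fin 2) (x : E2) : ℝ := fderiv ℝ u x (ee i)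

/-- The equation `div [Df(∇u)] = 0`, i.e. `∑ i, ∂ᵢ[(∂f/∂pᵢ)(∇u(x))] = 0` on `ℝ²`. -/
def solves (f u : E2 → ℝ) : Prop :=
  ∀ x : E2, ∑ i : Fin 2, fderiv ℝ (fun y => fderiv ℝ f (gradient u y) (ee i)) x (ee i) = 0

/-!
The derivative `w = ∂₁u` is a weak solution of the linearized equation `div (D²f(∇u) ∇w) = 0`.
Testing with `η² arsinh(w)` gives a Caccioppoli inequality that bounds
`∫ η² arsinh'(w) D²f(∇u)(∇w, ∇w)` by the supremum of `arsinh(w)² / arsinh'(w) · |D²f(∇u)|` times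
`∫ |∇η|²`. The supremum is finite: `|w|` is at most of order `|∇u|ᵐ`, so the first factor is at most
of order `log² |∇u| · |∇u|ᵐ`, while `|D²f(∇u)|` decays like `log |∇u| / |∇u|`. Since balls have zero
capacity in the plane, letting `η → 1` yields `∇w = 0`. What remains of the equation in
nondivergence form is `D²f(∇u)(e₂, e₂) ∂₂₂u = 0`, so `D²u = 0`.
-/

open Finset (range)
open Module (finrank)

theorem norm_sum_pow_eq_sum_norm_pow {ι F : Type*} [NormedAddCommGroup F] {s : Finset ι}
    {f : ι → F} {n : ℕ} (hn : n ≠ 0) (hf : (s : Set ι).Pairwise fun i j => f i = 0 ∨ f j = 0) :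
    ‖∑ i ∈ s, f i‖ ^ n = ∑ i ∈ s, ‖f i‖ ^ n := by
  by_cases h : ∃ i ∈ s, f i ≠ 0
  · obtain ⟨i, hi, hfi⟩ := h
    have hf_ne : ∀ j ∈ s, j ≠ i → f j = 0 := fun j hj hji =>
      (hf hj hi hji).resolve_right hfi
    rw [Finset.sum_eq_single_of_mem i hi hf_ne, Finset.sum_eq_single_of_mem i hi]
    intro j hj hji
    rw [hf_ne j hj hji, norm_zero, zero_pow hn]
  · push Not at h
    rw [Finset.sum_eq_zero h, norm_zero, zero_pow hn, Finset.sum_eq_zero]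
    intro i hi
    rw [h i hi, norm_zero, zero_pow hn]

theorem dist_mem_Ioo_of_fderiv_contDiffBump_ne_zero {E : Type*} [NormedAddCommGroup E]
    [NormedSpace ℝ E] [HasContDiffBump E] {c : E} (χ : ContDiffBump c) {x : E}
    (hx : fderiv ℝ χ x ≠ 0) : dist x c ∈ Set.Ioo χ.rIn χ.rOut := by
  constructor <;> by_contra! h <;> refine hx ?_
  · refine IsLocalMax.fderiv_eq_zero (.of_forall fun y => ?_)
    rw [χ.one_of_mem_closedBall h]
    exact χ.le_one
  · refine IsLocalMin.fderiv_eq_zero (.of_forall fun y => ?_)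
    rw [χ.zero_of_le_dist h]
    exact χ.nonneg

/-- The dilation `x ↦ φ(x / 2ᵏ)` of `φ`, which carries the shell `R < ‖x‖ < 2R` to its `k`-th
dyadic successor. -/
def dyadicDilation {E F : Type*} [AddCommGroup E] [Module ℝ E] (φ : E → F) (k : ℕ) (x : E) : F :=
  φ (((2 : ℝ) ^ k)⁻¹ • x)

/-- The average of the first `N` dyadic dilations of `φ`. Applied to a bump function it is a smooth
version of the logarithmic cutoff function. -/
def dyadicAverage {E : Type*} [AddCommGroup E] [Module ℝ E] (φ : E → ℝ) (N : ℕ) (x : E) : ℝ :=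
  (N : ℝ)⁻¹ * ∑ k ∈ range N, dyadicDilation φ k x

section Dyadic

variable {E : Type*} [NormedAddCommGroup E] [NormedSpace ℝ E] {φ : E → ℝ} {R : ℝ} {N : ℕ}

theorem contDiff_dyadicDilation {n : WithTop ℕ∞} (hφ : ContDiff ℝ n φ) (k : ℕ) :
    ContDiff ℝ n (dyadicDilation φ k) :=
  hφ.comp (contDiff_const_smul _)

theorem hasCompactSupport_dyadicDilation (hφ : HasCompactSupport φ) (k : ℕ) :
    HasCompactSupport (dyadicDilation φ k) :=
  hφ.comp_smul (by positivity)

theorem fderiv_dyadicDilation_eq_zero_or_eq_zero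
    (hφ : ∀ x, fderiv ℝ φ x ≠ 0 → ‖x‖ ∈ Set.Ioo R (2 * R)) {j k : ℕ} (hjk : j ≠ k) (x : E) :
    fderiv ℝ (dyadicDilation φ j) x = 0 ∨ fderiv ℝ (dyadicDilation φ k) x = 0 := by
  wlog h_lt : j < k generalizing j k
  · exact (this hjk.symm (by omega)).symm
  by_contra! h
  have h_shell : ∀ i : ℕ, fderiv ℝ (dyadicDilation φ i) x ≠ 0 →
      2 ^ i * R < ‖x‖ ∧ ‖x‖ < 2 ^ (i + 1) * R := by
    intro i hi
    unfold dyadicDilation at hi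
    rw [fderiv_comp_smul] at hi
    have h_mem := hφ _ (right_ne_zero_of_smul hi)
    rw [norm_smul, norm_of_nonneg (by positivity), inv_mul_eq_div, Set.mem_Ioo,
      lt_div_iff₀ (by positivity), div_lt_iff₀ (by positivity)] at h_mem
    constructor
    · linarith
    · rw [pow_succ]
      linarith
  have hR : 0 < R := by
    have h_lt := (h_shell j h.1).1.trans (h_shell j h.1).2
    rw [pow_succ] at h_lt
    exact pos_of_mul_pos_right (by linarith : 0 < (2 : ℝ) ^ j * R) (by positivity)
  have h_pow : (2 : ℝ) ^ (j + 1) * R ≤ 2 ^ k * R := by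
    gcongr
    · exact one_le_two
    · exact h_lt
  linarith [(h_shell j h.1).2, (h_shell k h.2).1]

theorem contDiff_dyadicAverage {n : WithTop ℕ∞} (hφ : ContDiff ℝ n φ) (N : ℕ) :
    ContDiff ℝ n (dyadicAverage φ N) :=
  contDiff_const.mul (ContDiff.sum fun k _ => contDiff_dyadicDilation hφ k)

theorem hasCompactSupport_dyadicAverage (hφ : HasCompactSupport φ) (N : ℕ) :
    HasCompactSupport (dyadicAverage φ N) := by
  have h_compact := (range N).isCompact_biUnion fun k _ =>
    (hasCompactSupport_dyadicDilation hφ k).isCompact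
  refine .mul_left (.intro h_compact fun x hx => Finset.sum_eq_zero fun k hk => ?_)
  exact image_eq_zero_of_notMem_tsupport fun h => hx (Set.mem_biUnion hk h)

theorem dyadicAverage_eq_one (hφ : ∀ x ∈ ball (0 : E) R, φ x = 1) (hN : N ≠ 0) {x : E}
    (hx : x ∈ ball (0 : E) R) : dyadicAverage φ N x = 1 := by
  have h_dilation : ∀ k ∈ range N, dyadicDilation φ k x = 1 := by
    refine fun k _ => hφ _ ?_
    have h_scale : ((2 : ℝ) ^ k)⁻¹ ≤ 1 := inv_le_one_of_one_le₀ (one_le_pow₀ one_le_two)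
    rw [mem_ball_zero_iff] at hx ⊢
    rw [norm_smul, norm_of_nonneg (by positivity)]
    exact (mul_le_of_le_one_left (norm_nonneg x) h_scale).trans_lt hx
  rw [dyadicAverage, Finset.sum_congr rfl h_dilation]
  simp [hN]

theorem fderiv_dyadicAverage (hφ : ContDiff ℝ 1 φ) (x : E) :
    fderiv ℝ (dyadicAverage φ N) x =
      (N : ℝ)⁻¹ • ∑ k ∈ range N, fderiv ℝ (dyadicDilation φ k) x := by
  have h_diff : ∀ k ∈ range N, DifferentiableAt ℝ (dyadicDilation φ k) x := fun k _ =>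
    (contDiff_dyadicDilation hφ k).differentiable one_ne_zero x
  unfold dyadicAverage
  rw [fderiv_const_mul (.fun_sum h_diff), fderiv_fun_sum h_diff]

end Dyadic

section Energy

variable {E : Type*} [NormedAddCommGroup E] [NormedSpace ℝ E] [MeasurableSpace E] [BorelSpace E]
  {μ : Measure E} {φ : E → ℝ} {R : ℝ} {N : ℕ}

theorem integrable_norm_fderiv_pow [IsFiniteMeasureOnCompacts μ] (hφ : ContDiff ℝ 1 φ)
    (hc : HasCompactSupport φ) {n : ℕ} (hn : n ≠ 0) :
    Integrable (fun x => ‖fderiv ℝ φ x‖ ^ n) μ :=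
  Continuous.integrable_of_hasCompactSupport ((hφ.continuous_fderiv one_ne_zero).norm.pow n)
    ((hc.fderiv ℝ).comp_left (g := fun L => ‖L‖ ^ n) (by simp [hn]))

variable [FiniteDimensional ℝ E] [μ.IsAddHaarMeasure]

theorem integral_norm_fderiv_comp_smul_pow_finrank {F : Type*} [NormedAddCommGroup F]
    [NormedSpace ℝ F] (φ : E → F) {c : ℝ} (hc : c ≠ 0) :
    ∫ x, ‖fderiv ℝ (fun y => φ (c • y)) x‖ ^ finrank ℝ E ∂μ =
      ∫ x, ‖fderiv ℝ φ x‖ ^ finrank ℝ E ∂μ := by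
  have hc_pow : |c| ^ finrank ℝ E ≠ 0 := pow_ne_zero _ (abs_ne_zero.2 hc)
  simp_rw [fderiv_comp_smul, norm_smul, mul_pow, norm_eq_abs]
  rw [integral_const_mul, Measure.integral_comp_smul μ fun y => ‖fderiv ℝ φ y‖ ^ finrank ℝ E,
    smul_eq_mul, abs_inv, abs_pow, mul_inv_cancel_left₀ hc_pow]

theorem integral_norm_fderiv_dyadicAverage_pow_finrank [Nontrivial E] (hφ : ContDiff ℝ 1 φ)
    (hc : HasCompactSupport φ) (h_shell : ∀ x, fderiv ℝ φ x ≠ 0 → ‖x‖ ∈ Set.Ioo R (2 * R)) :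
    ∫ x, ‖fderiv ℝ (dyadicAverage φ N) x‖ ^ finrank ℝ E ∂μ =
      (N : ℝ)⁻¹ ^ finrank ℝ E * (N * ∫ x, ‖fderiv ℝ φ x‖ ^ finrank ℝ E ∂μ) := by
  have hn : finrank ℝ E ≠ 0 := Module.finrank_pos.ne'
  have h_int : ∀ k ∈ range N, Integrable
      (fun x => ‖fderiv ℝ (dyadicDilation φ k) x‖ ^ finrank ℝ E) μ := fun k _ =>
    integrable_norm_fderiv_pow (contDiff_dyadicDilation hφ k)
      (hasCompactSupport_dyadicDilation hc k) hn
  have h_energy : ∀ k ∈ range N, ∫ x, ‖fderiv ℝ (dyadicDilation φ k) x‖ ^ finrank ℝ E ∂μ =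
      ∫ x, ‖fderiv ℝ φ x‖ ^ finrank ℝ E ∂μ := fun k _ =>
    integral_norm_fderiv_comp_smul_pow_finrank φ (by positivity)
  have h_pointwise : ∀ x, ‖fderiv ℝ (dyadicAverage φ N) x‖ ^ finrank ℝ E =
      (N : ℝ)⁻¹ ^ finrank ℝ E *
        ∑ k ∈ range N, ‖fderiv ℝ (dyadicDilation φ k) x‖ ^ finrank ℝ E := by
    intro x
    rw [fderiv_dyadicAverage hφ, norm_smul, mul_pow,
      norm_of_nonneg (by positivity), norm_sum_pow_eq_sum_norm_pow hn]
    exact fun _ _ _ _ hjk => fderiv_dyadicDilation_eq_zero_or_eq_zero h_shell hjk x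
  simp only [h_pointwise]
  rw [integral_const_mul, integral_finsetSum _ h_int, Finset.sum_congr rfl h_energy,
    Finset.sum_const, Finset.card_range, nsmul_eq_mul]

/-- Balls have zero `n`-capacity in dimension `n ≥ 2`. -/
theorem exists_cutoff_integral_norm_fderiv_pow_finrank_le (hE : 1 < finrank ℝ E) (μ : Measure E)
    [μ.IsAddHaarMeasure] (hR : 0 < R) {ε : ℝ} (hε : 0 < ε) :
    ∃ η : E → ℝ, ContDiff ℝ 1 η ∧ HasCompactSupport η ∧ (∀ x ∈ ball (0 : E) R, η x = 1) ∧
      ∫ x, ‖fderiv ℝ η x‖ ^ finrank ℝ E ∂μ ≤ ε := by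
  have : Nontrivial E := Module.nontrivial_of_finrank_pos (zero_lt_one.trans hE)
  let χ : ContDiffBump (0 : E) := ⟨R, 2 * R, hR, by linarith⟩
  have hχ : ContDiff ℝ 1 χ := χ.contDiff
  set I := ∫ x, ‖fderiv ℝ χ x‖ ^ finrank ℝ E ∂μ
  obtain ⟨N, hN⟩ := exists_nat_gt (max 1 (I / ε))
  have hN_one : (1 : ℝ) < N := (le_max_left _ _).trans_lt hN
  have hN_ne : N ≠ 0 := by
    rintro rfl
    norm_num at hN_one
  have hN_energy : I ≤ N * ε := ((div_lt_iff₀ hε).1 ((le_max_right _ _).trans_lt hN)).le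
  refine ⟨dyadicAverage χ N, contDiff_dyadicAverage hχ N,
    hasCompactSupport_dyadicAverage χ.hasCompactSupport N,
    fun x hx => dyadicAverage_eq_one (fun y hy => ?_) hN_ne hx, ?_⟩
  · exact χ.one_of_mem_closedBall (ball_subset_closedBall hy)
  have h_shell : ∀ x, fderiv ℝ χ x ≠ 0 → ‖x‖ ∈ Set.Ioo R (2 * R) := fun x hx => by
    simpa using dist_mem_Ioo_of_fderiv_contDiffBump_ne_zero χ hx
  have hI : 0 ≤ I := integral_nonneg fun x => by positivity
  calc ∫ x, ‖fderiv ℝ (dyadicAverage χ N) x‖ ^ finrank ℝ E ∂μ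
      = (N : ℝ)⁻¹ ^ finrank ℝ E * (N * I) :=
        integral_norm_fderiv_dyadicAverage_pow_finrank hχ χ.hasCompactSupport h_shell
    _ ≤ (N : ℝ)⁻¹ ^ 2 * (N * I) := by
        refine mul_le_mul_of_nonneg_right ?_ (mul_nonneg N.cast_nonneg hI)
        exact pow_le_pow_of_le_one (by positivity) (inv_le_one_of_one_le₀ hN_one.le) hE
    _ = (N : ℝ)⁻¹ * I := by field_simp
    _ ≤ ε := (inv_mul_le_iff₀ (by linarith)).2 hN_energy

theorem eq_zero_of_integral_sq_mul_le_energy (hE : finrank ℝ E = 2) {Φ : E → ℝ}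
    (hΦ : Continuous Φ) (hΦ_nonneg : ∀ x, 0 ≤ Φ x) {C : ℝ}
    (h : ∀ η : E → ℝ, ContDiff ℝ 1 η → HasCompactSupport η →
      ∫ x, η x ^ 2 * Φ x ∂μ ≤ C * ∫ x, ‖fderiv ℝ η x‖ ^ 2 ∂μ) (x : E) : Φ x = 0 := by
  set U : Set E := ball 0 (‖x‖ + 1)
  have hU_int : IntegrableOn Φ U μ :=
    (hΦ.continuousOn.integrableOn_compact (isCompact_closedBall _ _)).mono_set
      ball_subset_closedBall
  have hU_le : ∫ y in U, Φ y ∂μ ≤ 0 := by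
    refine le_of_forall_pos_le_add fun ε hε => ?_
    obtain ⟨η, hη, hηc, hη_one, hη_energy⟩ := exists_cutoff_integral_norm_fderiv_pow_finrank_le
      (hE ▸ one_lt_two) μ (R := ‖x‖ + 1) (by positivity) (ε := ε / (|C| + 1)) (by positivity)
    rw [hE] at hη_energy
    calc ∫ y in U, Φ y ∂μ = ∫ y in U, η y ^ 2 * Φ y ∂μ :=
          setIntegral_congr_fun measurableSet_ball fun y hy => by simp [hη_one y hy]
      _ ≤ ∫ y, η y ^ 2 * Φ y ∂μ := by
          refine setIntegral_le_integral ?_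
            (.of_forall fun y => mul_nonneg (sq_nonneg _) (hΦ_nonneg y))
          exact Continuous.integrable_of_hasCompactSupport ((hη.continuous.pow 2).mul hΦ)
            (hηc.comp_left (g := fun r : ℝ => r ^ 2) (by simp)).mul_right
      _ ≤ C * ∫ y, ‖fderiv ℝ η y‖ ^ 2 ∂μ := h η hη hηc
      _ ≤ |C| * (ε / (|C| + 1)) := by
          refine mul_le_mul (le_abs_self C) hη_energy ?_ (abs_nonneg C)
          exact integral_nonneg fun y => by positivity
      _ ≤ 0 + ε := by
          rw [zero_add, ← mul_div_assoc, div_le_iff₀ (by positivity)]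
          linarith
  have hU_ae : Φ =ᵐ[μ.restrict U] 0 :=
    (setIntegral_eq_zero_iff_of_nonneg_ae (.of_forall hΦ_nonneg) hU_int).1
      (hU_le.antisymm (integral_nonneg hΦ_nonneg))
  exact Measure.eqOn_open_of_ae_eq hU_ae isOpen_ball hΦ.continuousOn continuousOn_const
    (show x ∈ U by simp [U])

end Energy

open scoped Gradient InnerProductSpace

/-- `w` is a weak solution of `div (B ∇w) = 0`, where the coefficients `B x` are bilinear forms:
`∫ B x (∇w, ∇φ) = 0` for all `C¹` test functions `φ` with compact support. -/
def IsWeakSolution {E : Type*} [NormedAddCommGroup E] [InnerProductSpace ℝ E] [CompleteSpace E]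
    [MeasurableSpace E] (μ : Measure E) (B : E → E →L[ℝ] E →L[ℝ] ℝ) (w : E → ℝ) : Prop :=
  ∀ φ : E → ℝ, ContDiff ℝ 1 φ → HasCompactSupport φ → ∫ x, B x (∇ w x) (∇ φ x) ∂μ = 0

section Liouville

/-- Expands `0 ≤ b (e g' p + 2 g q, e g' p + 2 g q)`. -/
theorem half_sq_mul_sub_le_bilin_of_nonneg {E : Type*} [SeminormedAddCommGroup E] [NormedSpace ℝ E]
    {b : E →L[ℝ] E →L[ℝ] ℝ} (hsymm : ∀ p q, b p q = b q p) (hnonneg : ∀ q, 0 ≤ b q q)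
    {g g' M : ℝ} (hg' : 0 < g') {q : E} (hM : g ^ 2 * b q q ≤ M * g' * ‖q‖ ^ 2) (e : ℝ) (p : E) :
    1 / 2 * (e ^ 2 * (g' * b p p)) - 2 * M * ‖q‖ ^ 2 ≤
      b p ((2 * e * g) • q + (e ^ 2 * g') • p) := by
  have h_square := hnonneg ((e * g') • p + (2 * g) • q)
  simp only [map_add, map_smul, add_apply, smul_apply, smul_eq_mul, hsymm q p] at h_square ⊢
  refine le_of_mul_le_mul_left ?_ hg'
  linear_combination h_square / 2 + 2 * hM

variable {E : Type*} [NormedAddCommGroup E] [InnerProductSpace ℝ E]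

section Gradient

variable [CompleteSpace E]

theorem norm_gradient (φ : E → ℝ) (x : E) : ‖∇ φ x‖ = ‖fderiv ℝ φ x‖ := by
  rw [← toDual_gradient, LinearIsometryEquiv.norm_map]

theorem contDiff_gradient {φ : E → ℝ} {m n : WithTop ℕ∞} (hφ : ContDiff ℝ n φ) (hmn : m + 1 ≤ n) :
    ContDiff ℝ m (∇ φ) :=
  (InnerProductSpace.toDual ℝ E).symm.contDiff.comp (hφ.fderiv_right hmn)

theorem gradient_sq_mul_comp {η w : E → ℝ} {G : ℝ → ℝ} {x : E} (hη : DifferentiableAt ℝ η x)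
    (hw : DifferentiableAt ℝ w x) (hG : DifferentiableAt ℝ G (w x)) :
    ∇ (fun y => η y ^ 2 * G (w y)) x =
      (2 * η x * G (w x)) • ∇ η x + (η x ^ 2 * deriv G (w x)) • ∇ w x := by
  have h_fderiv : fderiv ℝ (fun y => η y ^ 2 * G (w y)) x =
      (2 * η x * G (w x)) • fderiv ℝ η x + (η x ^ 2 * deriv G (w x)) • fderiv ℝ w x := by
    refine ((hη.hasFDerivAt.pow 2).mul
      (hG.hasDerivAt.comp_hasFDerivAt x hw.hasFDerivAt)).fderiv.trans ?_
    ext v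
    simp
    ring
  simp only [gradient, h_fderiv, map_add, map_smul]

end Gradient

variable [FiniteDimensional ℝ E] [MeasurableSpace E] [BorelSpace E] {μ : Measure E}

/-- Caccioppoli inequality: test the equation with `η² G(w)`. -/
theorem IsWeakSolution.integral_sq_mul_le [IsFiniteMeasureOnCompacts μ]
    {B : E → E →L[ℝ] E →L[ℝ] ℝ} {w : E → ℝ} (hweak : IsWeakSolution μ B w) (hB : Continuous B)
    (hsymm : ∀ x p q, B x p q = B x q p) (hnonneg : ∀ x q, 0 ≤ B x q q) (hw : ContDiff ℝ 1 w)
    {G : ℝ → ℝ} (hG : ContDiff ℝ 1 G) (hG' : ∀ t, 0 < deriv G t) {M : ℝ}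
    (hM : ∀ x q, G (w x) ^ 2 * B x q q ≤ M * deriv G (w x) * ‖q‖ ^ 2) {η : E → ℝ}
    (hη : ContDiff ℝ 1 η) (hηc : HasCompactSupport η) :
    ∫ x, η x ^ 2 * (deriv G (w x) * B x (∇ w x) (∇ w x)) ∂μ ≤
      4 * M * ∫ x, ‖fderiv ℝ η x‖ ^ 2 ∂μ := by
  have hw_grad : Continuous (∇ w) := (contDiff_gradient (m := 0) hw le_rfl).continuous
  have hG_cont : Continuous (deriv G) := hG.continuous_deriv le_rfl
  let φ : E → ℝ := fun x => η x ^ 2 * G (w x)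
  have hφ : ContDiff ℝ 1 φ := (hη.pow 2).mul (hG.comp hw)
  have hη_sq : HasCompactSupport fun x => η x ^ 2 :=
    hηc.comp_left (g := fun r : ℝ => r ^ 2) (by simp)
  have hφc : HasCompactSupport φ := hη_sq.mul_right
  have h_pointwise : ∀ x, 1 / 2 * (η x ^ 2 * (deriv G (w x) * B x (∇ w x) (∇ w x))) -
      2 * M * ‖fderiv ℝ η x‖ ^ 2 ≤ B x (∇ w x) (∇ φ x) := by
    intro x
    rw [gradient_sq_mul_comp (hη.differentiable one_ne_zero x) (hw.differentiable one_ne_zero x)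
      (hG.differentiable one_ne_zero _), ← norm_gradient]
    exact half_sq_mul_sub_le_bilin_of_nonneg (hsymm x) (hnonneg x) (hG' _) (hM x _) _ _
  have h_int_energy : Integrable (fun x => η x ^ 2 * (deriv G (w x) * B x (∇ w x) (∇ w x))) μ :=
    Continuous.integrable_of_hasCompactSupport
      ((hη.continuous.pow 2).mul ((hG_cont.comp hw.continuous).mul
        ((hB.clm_apply hw_grad).clm_apply hw_grad))) hη_sq.mul_right
  have h_int_cutoff : Integrable (fun x => ‖fderiv ℝ η x‖ ^ 2) μ :=
    integrable_norm_fderiv_pow hη hηc two_ne_zero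
  have h_int_test : Integrable (fun x => B x (∇ w x) (∇ φ x)) μ := by
    refine Continuous.integrable_of_hasCompactSupport ((hB.clm_apply hw_grad).clm_apply
      (contDiff_gradient (m := 0) hφ le_rfl).continuous) (.intro hφc fun x hx => ?_)
    simp [gradient, fderiv_of_notMem_tsupport ℝ hx]
  have h_integral := integral_mono
    ((h_int_energy.const_mul (1 / 2)).sub (h_int_cutoff.const_mul (2 * M))) h_int_test h_pointwise
  simp only [Pi.sub_apply] at h_integral
  rw [hweak φ hφ hφc, integral_sub (h_int_energy.const_mul _) (h_int_cutoff.const_mul _),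
    integral_const_mul, integral_const_mul] at h_integral
  linarith

/-- Liouville theorem in the plane. The weight `G² / G'` measures the growth of `w` that the decay
of the coefficients has to compensate. -/
theorem IsWeakSolution.bilin_gradient_eq_zero [μ.IsAddHaarMeasure] (hE : finrank ℝ E = 2)
    {B : E → E →L[ℝ] E →L[ℝ] ℝ} {w : E → ℝ} (hweak : IsWeakSolution μ B w) (hB : Continuous B)
    (hsymm : ∀ x p q, B x p q = B x q p) (hnonneg : ∀ x q, 0 ≤ B x q q) (hw : ContDiff ℝ 1 w)
    {G : ℝ → ℝ} (hG : ContDiff ℝ 1 G) (hG' : ∀ t, 0 < deriv G t) {M : ℝ}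
    (hM : ∀ x q, G (w x) ^ 2 * B x q q ≤ M * deriv G (w x) * ‖q‖ ^ 2) (x : E) :
    B x (∇ w x) (∇ w x) = 0 := by
  have hw_grad : Continuous (∇ w) := (contDiff_gradient (m := 0) hw le_rfl).continuous
  have h_density : deriv G (w x) * B x (∇ w x) (∇ w x) = 0 :=
    eq_zero_of_integral_sq_mul_le_energy (μ := μ) hE
      (((hG.continuous_deriv le_rfl).comp hw.continuous).mul
        ((hB.clm_apply hw_grad).clm_apply hw_grad))
      (fun y => mul_nonneg (hG' _).le (hnonneg y _))
      (fun _ hη hηc => hweak.integral_sq_mul_le hB hsymm hnonneg hw hG hG' hM hη hηc) x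
  exact (mul_eq_zero.1 h_density).resolve_left (hG' _).ne'

end Liouville

section DivergenceFree

variable {E : Type*} [NormedAddCommGroup E] [NormedSpace ℝ E] [MeasurableSpace E] [BorelSpace E]
  {μ : Measure E}

theorem hasDerivAt_integral_comp_add_smul_mul [IsFiniteMeasureOnCompacts μ] {g ψ : E → ℝ}
    (hg : ContDiff ℝ 1 g) (hψ : Continuous ψ) (hc : HasCompactSupport ψ) (v : E) :
    HasDerivAt (fun s : ℝ => ∫ x, g (x + s • v) * ψ x ∂μ) (∫ x, fderiv ℝ g x v * ψ x ∂μ) 0 := by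
  have hg_fderiv : Continuous (fderiv ℝ g) := hg.continuous_fderiv one_ne_zero
  have hg_shift : ∀ s : ℝ, Continuous fun x => g (x + s • v) := fun s =>
    hg.continuous.comp (by fun_prop)
  have hg_deriv : Continuous fun z : ℝ × E => fderiv ℝ g (z.2 + z.1 • v) v :=
    (hg_fderiv.comp (by fun_prop)).clm_apply continuous_const
  obtain ⟨C, hC⟩ :=
    ((isCompact_closedBall (0 : ℝ) 1).prod hc.isCompact).exists_bound_of_continuousOn
      hg_deriv.continuousOn
  have h_bound : ∀ x, ∀ s ∈ ball (0 : ℝ) 1, ‖fderiv ℝ g (x + s • v) v * ψ x‖ ≤ C * ‖ψ x‖ := by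
    intro x s hs
    by_cases hx : x ∈ tsupport ψ
    · rw [norm_mul]
      exact mul_le_mul_of_nonneg_right (hC (s, x) ⟨ball_subset_closedBall hs, hx⟩) (norm_nonneg _)
    · simp [image_eq_zero_of_notMem_tsupport hx]
  have h_deriv : ∀ x s, HasDerivAt (fun s : ℝ => g (x + s • v) * ψ x)
      (fderiv ℝ g (x + s • v) v * ψ x) s := by
    intro x s
    have h_line : HasDerivAt (fun s : ℝ => x + s • v) v s := by
      simpa using ((hasDerivAt_id s).smul_const v).const_add x
    exact (((hg.differentiable one_ne_zero _).hasFDerivAt.comp_hasDerivAt s h_line)).mul_const _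
  have h_integral := hasDerivAt_integral_of_dominated_loc_of_deriv_le (μ := μ) (x₀ := (0 : ℝ))
    (F' := fun s x => fderiv ℝ g (x + s • v) v * ψ x) (ball_mem_nhds 0 one_pos)
    (.of_forall fun s =>
      (((hg_shift s).mul hψ).integrable_of_hasCompactSupport hc.mul_left).aestronglyMeasurable)
    (((hg_shift 0).mul hψ).integrable_of_hasCompactSupport hc.mul_left)
    ((((hg_deriv.comp (by fun_prop : Continuous fun x : E => ((0 : ℝ), x))).mul
      hψ).integrable_of_hasCompactSupport hc.mul_left).aestronglyMeasurable)
    (.of_forall h_bound) ((hψ.norm.integrable_of_hasCompactSupport hc.norm).const_mul C)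
    (.of_forall fun x s _ => h_deriv x s)
  simpa only [Pi.mul_apply, zero_smul, add_zero] using h_integral.2

variable [FiniteDimensional ℝ E] [μ.IsAddHaarMeasure]

theorem integral_mul_fderiv_eq_neg_of_hasCompactSupport {g φ : E → ℝ} (hg : ContDiff ℝ 1 g)
    (hφ : ContDiff ℝ 1 φ) (hc : HasCompactSupport φ) (v : E) :
    ∫ x, g x * fderiv ℝ φ x v ∂μ = -∫ x, fderiv ℝ g x v * φ x ∂μ := by
  have hg_fderiv : Continuous fun x => fderiv ℝ g x v :=
    (hg.continuous_fderiv one_ne_zero).clm_apply continuous_const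
  have hφ_fderiv : Continuous fun x => fderiv ℝ φ x v :=
    (hφ.continuous_fderiv one_ne_zero).clm_apply continuous_const
  exact integral_mul_fderiv_eq_neg_fderiv_mul_of_integrable
    ((hg_fderiv.mul hφ.continuous).integrable_of_hasCompactSupport hc.mul_left)
    ((hg.continuous.mul hφ_fderiv).integrable_of_hasCompactSupport (hc.fderiv_apply ℝ v).mul_left)
    ((hg.continuous.mul hφ.continuous).integrable_of_hasCompactSupport hc.mul_left)
    (fun x _ => hg.differentiable one_ne_zero x) (fun x _ => hφ.differentiable one_ne_zero x)

variable {ι : Type*} [Fintype ι] {P : ι → E → ℝ} {e : ι → E}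

theorem sum_integral_mul_fderiv_eq_zero (hP : ∀ i, ContDiff ℝ 1 (P i))
    (hdiv : ∀ x, ∑ i, fderiv ℝ (P i) x (e i) = 0) {φ : E → ℝ} (hφ : ContDiff ℝ 1 φ)
    (hc : HasCompactSupport φ) : ∑ i, ∫ x, P i x * fderiv ℝ φ x (e i) ∂μ = 0 := by
  have h_int : ∀ i ∈ Finset.univ, Integrable (fun x => fderiv ℝ (P i) x (e i) * φ x) μ :=
    fun i _ => ((((hP i).continuous_fderiv one_ne_zero).clm_apply continuous_const).mul
      hφ.continuous).integrable_of_hasCompactSupport hc.mul_left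
  simp_rw [integral_mul_fderiv_eq_neg_of_hasCompactSupport (hP _) hφ hc]
  rw [Finset.sum_neg_distrib, ← integral_finsetSum _ h_int]
  simp [← Finset.sum_mul, hdiv]

theorem sum_integral_fderiv_mul_fderiv_eq_zero (hP : ∀ i, ContDiff ℝ 1 (P i))
    (hdiv : ∀ x, ∑ i, fderiv ℝ (P i) x (e i) = 0) {φ : E → ℝ} (hφ : ContDiff ℝ 1 φ)
    (hc : HasCompactSupport φ) (v : E) :
    ∑ i, ∫ x, fderiv ℝ (P i) x v * fderiv ℝ φ x (e i) ∂μ = 0 := by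
  have h_translate : ∀ s : ℝ, ∑ i, ∫ x, P i (x + s • v) * fderiv ℝ φ x (e i) ∂μ = 0 := fun s =>
    sum_integral_mul_fderiv_eq_zero (P := fun i x => P i (x + s • v))
      (fun i => (hP i).comp (by fun_prop))
      (fun x => by simpa only [fderiv_comp_add_right] using hdiv (x + s • v)) hφ hc
  have h_deriv := HasDerivAt.fun_sum (u := Finset.univ) fun i _ =>
    hasDerivAt_integral_comp_add_smul_mul (μ := μ) (hP i)
      ((hφ.continuous_fderiv one_ne_zero).clm_apply continuous_const)
      (hc.fderiv_apply ℝ (e i)) v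
  simp only [h_translate] at h_deriv
  exact h_deriv.unique (hasDerivAt_const 0 0)

end DivergenceFree

section GradientEquation

variable {E : Type*} [NormedAddCommGroup E] [InnerProductSpace ℝ E]

theorem sum_fderiv_smul_eq_gradient [CompleteSpace E] {ι : Type*} [Fintype ι]
    (b : OrthonormalBasis ι ℝ E) (φ : E → ℝ) (x : E) :
    ∑ i, fderiv ℝ φ x (b i) • b i = ∇ φ x := by
  simpa [inner_gradient_right] using b.sum_repr' (∇ φ x)

section Hessian

variable [CompleteSpace E]

/-- The coefficients `D²f(∇u)` of the equation satisfied by the directional derivatives of a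
solution `u` of `div (Df(∇u)) = 0`. -/
def linearizedCoeff (f u : E → ℝ) (x : E) : E →L[ℝ] E →L[ℝ] ℝ :=
  fderiv ℝ (fderiv ℝ f) (∇ u x)

variable {f u : E → ℝ}

theorem inner_fderiv_gradient_left (u : E → ℝ) (x p q : E) :
    ⟪fderiv ℝ (∇ u) x p, q⟫_ℝ = fderiv ℝ (fderiv ℝ u) x p q := by
  have h_comp := (InnerProductSpace.toDual ℝ E).symm.toContinuousLinearEquiv.comp_fderiv
    (f := fderiv ℝ u) (x := x)
  exact (congrArg (⟪· p, q⟫_ℝ) h_comp).trans InnerProductSpace.toDual_symm_apply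

theorem inner_fderiv_gradient_comm (hu : ContDiff ℝ 2 u) (x p q : E) :
    ⟪fderiv ℝ (∇ u) x p, q⟫_ℝ = ⟪fderiv ℝ (∇ u) x q, p⟫_ℝ := by
  rw [inner_fderiv_gradient_left, inner_fderiv_gradient_left]
  exact (hu.contDiffAt.isSymmSndFDerivAt (by simp)).eq p q

theorem fderiv_gradient_apply (hu : ContDiff ℝ 2 u) (x v : E) :
    fderiv ℝ (∇ u) x v = ∇ (fun y => fderiv ℝ u y v) x := by
  have hu_fderiv : DifferentiableAt ℝ (fderiv ℝ u) x :=
    (hu.fderiv_right (m := 1) (by norm_num)).differentiable one_ne_zero x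
  refine ext_inner_right ℝ fun q => ?_
  rw [inner_fderiv_gradient_comm hu, inner_fderiv_gradient_left, inner_gradient_left,
    fderiv_clm_apply hu_fderiv (by fun_prop)]
  simp

theorem contDiff_fderiv_gradient_apply (hf : ContDiff ℝ 2 f) (hu : ContDiff ℝ 2 u) (a : E) :
    ContDiff ℝ 1 fun x => fderiv ℝ f (∇ u x) a :=
  ((hf.fderiv_right (m := 1) (by norm_num)).comp
    (contDiff_gradient hu (by norm_num))).clm_apply contDiff_const

theorem fderiv_fderiv_gradient_apply (hf : ContDiff ℝ 2 f) (hu : ContDiff ℝ 2 u) (a x v : E) :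
    fderiv ℝ (fun y => fderiv ℝ f (∇ u y) a) x v =
      linearizedCoeff f u x (∇ (fun y => fderiv ℝ u y v) x) a := by
  have hf_fderiv : Differentiable ℝ (fderiv ℝ f) :=
    (hf.fderiv_right (m := 1) (by norm_num)).differentiable one_ne_zero
  have hu_grad : Differentiable ℝ (∇ u) :=
    (contDiff_gradient (m := 1) hu (by norm_num)).differentiable one_ne_zero
  have h_comp := fderiv_comp x (hf_fderiv (∇ u x)) (hu_grad x)
  simp only [Function.comp_def] at h_comp
  rw [fderiv_clm_apply (by fun_prop) (by fun_prop), h_comp, ← fderiv_gradient_apply hu]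
  simp [linearizedCoeff]

theorem continuous_linearizedCoeff (hf : ContDiff ℝ 2 f) (hu : ContDiff ℝ 1 u) :
    Continuous (linearizedCoeff f u) :=
  ((hf.fderiv_right (m := 1) (by norm_num)).continuous_fderiv one_ne_zero).comp
    (contDiff_gradient (m := 0) hu le_rfl).continuous

theorem linearizedCoeff_comm (hf : ContDiff ℝ 2 f) (x p q : E) :
    linearizedCoeff f u x p q = linearizedCoeff f u x q p :=
  (hf.contDiffAt.isSymmSndFDerivAt (by simp)).eq p q

theorem eq_inner_add_of_fderiv_gradient_eq_zero (hu : ContDiff ℝ 2 u)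
    (h : ∀ x, fderiv ℝ (∇ u) x = 0) (x : E) : u x = ⟪∇ u 0, x⟫_ℝ + u 0 := by
  have hu_grad : ∀ y, ∇ u y = ∇ u 0 := fun y =>
    is_const_of_fderiv_eq_zero
      ((contDiff_gradient (m := 1) hu (by norm_num)).differentiable one_ne_zero) h y 0
  have hu_diff : Differentiable ℝ u := hu.differentiable two_ne_zero
  have h_const : u x - ⟪∇ u 0, x⟫_ℝ = u 0 - ⟪∇ u 0, 0⟫_ℝ := by
    refine is_const_of_fderiv_eq_zero (𝕜 := ℝ) (f := fun y => u y - ⟪∇ u 0, y⟫_ℝ)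
      (hu_diff.sub (InnerProductSpace.toDual ℝ E (∇ u 0)).differentiable) (fun y => ?_) x 0
    have h_inner : HasFDerivAt (fun z => ⟪∇ u 0, z⟫_ℝ) (InnerProductSpace.toDual ℝ E (∇ u 0)) y :=
      (InnerProductSpace.toDual ℝ E (∇ u 0)).hasFDerivAt
    rw [fderiv_fun_sub (hu_diff y) h_inner.differentiableAt, h_inner.fderiv, ← toDual_gradient,
      hu_grad, sub_self]
  rw [inner_zero_right, sub_zero] at h_const
  linarith

end Hessian

variable [FiniteDimensional ℝ E] {f u : E → ℝ}

theorem isWeakSolution_linearizedCoeff [MeasurableSpace E] [BorelSpace E] (μ : Measure E)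
    [μ.IsAddHaarMeasure] {ι : Type*} [Fintype ι] (b : OrthonormalBasis ι ℝ E)
    (hf : ContDiff ℝ 2 f) (hu : ContDiff ℝ 2 u)
    (hdiv : ∀ x, ∑ i, fderiv ℝ (fun y => fderiv ℝ f (∇ u y) (b i)) x (b i) = 0) (v : E) :
    IsWeakSolution μ (linearizedCoeff f u) fun x => fderiv ℝ u x v := by
  intro φ hφ hc
  have hP := fun i => contDiff_fderiv_gradient_apply hf hu (b i)
  have h_int : ∀ i ∈ Finset.univ, Integrable (fun x =>
      fderiv ℝ (fun y => fderiv ℝ f (∇ u y) (b i)) x v * fderiv ℝ φ x (b i)) μ := fun i _ =>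
    ((((hP i).continuous_fderiv one_ne_zero).clm_apply continuous_const).mul
      ((hφ.continuous_fderiv one_ne_zero).clm_apply
        continuous_const)).integrable_of_hasCompactSupport (hc.fderiv_apply ℝ (b i)).mul_left
  rw [← sum_integral_fderiv_mul_fderiv_eq_zero (μ := μ) hP hdiv hφ hc v,
    ← integral_finsetSum _ h_int]
  refine integral_congr_ae (.of_forall fun x => ?_)
  simp only [fderiv_fderiv_gradient_apply hf hu, ← sum_fderiv_smul_eq_gradient b φ, map_sum,
    map_smul, smul_eq_mul, mul_comm]

theorem fderiv_gradient_eq_zero_of_gradient_fderiv_apply_eq_zero (b : OrthonormalBasis (Fin 2) ℝ E)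
    (hf : ContDiff ℝ 2 f) (hpos : ∀ x q, q ≠ 0 → 0 < linearizedCoeff f u x q q)
    (hu : ContDiff ℝ 2 u)
    (hdiv : ∀ x, ∑ i, fderiv ℝ (fun y => fderiv ℝ f (∇ u y) (b i)) x (b i) = 0)
    (h : ∀ x, ∇ (fun y => fderiv ℝ u y (b 0)) x = 0) (x : E) : fderiv ℝ (∇ u) x = 0 := by
  have h_col₀ : fderiv ℝ (∇ u) x (b 0) = 0 := by rw [fderiv_gradient_apply hu, h]
  set q := fderiv ℝ (∇ u) x (b 1) with hq
  have h_orth : ⟪b 0, q⟫_ℝ = 0 := by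
    rw [real_inner_comm, hq, inner_fderiv_gradient_comm hu, h_col₀, inner_zero_left]
  have h_parallel : q = ⟪b 1, q⟫_ℝ • b 1 := by
    conv_lhs => rw [← b.sum_repr' q, Fin.sum_univ_two, h_orth, zero_smul, zero_add]
  have h_elliptic : ⟪b 1, q⟫_ℝ * linearizedCoeff f u x (b 1) (b 1) = 0 := by
    have h_eq := hdiv x
    simp only [Fin.sum_univ_two, fderiv_fderiv_gradient_apply hf hu, ← fderiv_gradient_apply hu,
      h_col₀, ← hq, map_zero, zero_apply, zero_add] at h_eq
    rwa [h_parallel, map_smul, smul_apply, smul_eq_mul] at h_eq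
  have h_col₁ : q = 0 := by
    rw [h_parallel, (mul_eq_zero.1 h_elliptic).resolve_right
      (hpos x _ (b.orthonormal.ne_zero 1)).ne', zero_smul]
  refine ContinuousLinearMap.coe_injective (b.toBasis.ext fun i => ?_)
  fin_cases i
  · simpa using h_col₀
  · simpa using h_col₁

end GradientEquation

section Growth

theorem abs_arsinh_le_log (w : ℝ) : |arsinh w| ≤ log (1 + 2 * |w|) := by
  have h_abs : |arsinh w| = arsinh |w| := by
    rcases abs_cases w with ⟨h, hw⟩ | ⟨h, hw⟩
    · rw [h, abs_of_nonneg (arsinh_nonneg_iff.2 hw)]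
    · rw [h, arsinh_neg, abs_of_neg (arsinh_neg_iff.2 hw)]
  have h_sqrt : √(1 + |w| ^ 2) ≤ 1 + |w| := by
    simpa only [norm_eq_abs, abs_abs] using sqrt_one_add_norm_sq_le |w|
  rw [h_abs]
  exact log_le_log (by positivity) (by linarith)

theorem log_pow_le_rpow_div {x ε : ℝ} (hx : 1 ≤ x) (hε : 0 < ε) {n : ℕ} (hn : n ≠ 0) :
    log x ^ n ≤ x ^ ε / (ε / n) ^ n := by
  have hn' : (n : ℝ) ≠ 0 := Nat.cast_ne_zero.2 hn
  have h_log : log x ≤ x ^ (ε / n) / (ε / n) :=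
    log_le_rpow_div (zero_le_one.trans hx) (by positivity)
  calc log x ^ n ≤ (x ^ (ε / n) / (ε / n)) ^ n := pow_le_pow_left₀ (log_nonneg hx) h_log n
    _ = x ^ ε / (ε / n) ^ n := by
      rw [div_pow, ← rpow_mul_natCast (zero_le_one.trans hx), div_mul_cancel₀ _ hn']

theorem deriv_arsinh (x : ℝ) : deriv arsinh x = (√(1 + x ^ 2))⁻¹ :=
  (hasDerivAt_arsinh x).deriv

theorem exists_arsinh_sq_mul_log_div_le {m L : ℝ} (hm0 : 0 ≤ m) (hm1 : m < 1) (hL : 0 ≤ L) :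
    ∃ M, ∀ t w : ℝ, 1 ≤ t → |w| ≤ L * t ^ m →
      arsinh w ^ 2 * (log (1 + t) / t) ≤ M * deriv arsinh w := by
  set c := 2 * (1 + L) with hc
  set C := c ^ (1 - m) / ((1 - m) / (3 : ℕ)) ^ 3 with hC
  refine ⟨(1 + L) * C, fun t w ht hw => ?_⟩
  have ht0 : 0 < t := one_pos.trans_le ht
  have htm_one : 1 ≤ t ^ m := one_le_rpow ht hm0
  have htm_le : t ^ m ≤ t := by simpa using rpow_le_rpow_of_exponent_le ht hm1.le
  have hLt : L * t ^ m ≤ L * t := mul_le_mul_of_nonneg_left htm_le hL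
  have hLt_nonneg : 0 ≤ L * t := by positivity
  have h_ct : c * t = 2 * t + 2 * (L * t) := by
    rw [hc]
    ring
  have h_arsinh : |arsinh w| ≤ log (c * t) :=
    (abs_arsinh_le_log w).trans (log_le_log (by positivity) (by linarith [h_ct]))
  have h_log : log (1 + t) ≤ log (c * t) := log_le_log (by positivity) (by linarith [h_ct])
  have h_log_nonneg : 0 ≤ log (1 + t) := log_nonneg (by linarith)
  have h_log_ct_nonneg : 0 ≤ log (c * t) := h_log_nonneg.trans h_log
  have h_sqrt : √(1 + w ^ 2) ≤ (1 + L) * t ^ m := by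
    have h_one_add := sqrt_one_add_norm_sq_le w
    rw [norm_eq_abs, sq_abs] at h_one_add
    linarith
  have h_cube : log (c * t) ^ 3 ≤ C * t ^ (1 - m) := by
    refine (log_pow_le_rpow_div (by linarith [h_ct]) (sub_pos.2 hm1) three_ne_zero).trans_eq ?_
    rw [mul_rpow (by positivity) ht0.le, hC, div_mul_eq_mul_div]
  rw [deriv_arsinh, ← div_eq_mul_inv, le_div_iff₀ (by positivity)]
  calc arsinh w ^ 2 * (log (1 + t) / t) * √(1 + w ^ 2)
      ≤ log (c * t) ^ 2 * (log (c * t) / t) * ((1 + L) * t ^ m) := by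
        rw [← sq_abs (arsinh w)]
        gcongr
    _ = (1 + L) * log (c * t) ^ 3 * (t ^ m / t) := by ring
    _ ≤ (1 + L) * (C * t ^ (1 - m)) * (t ^ m / t) := by gcongr
    _ = (1 + L) * C * (t ^ (1 - m) * t ^ m / t) := by ring
    _ = (1 + L) * C := by
      rw [← rpow_add ht0, sub_add_cancel, rpow_one, div_self ht0.ne', mul_one]

end Growth

section PlaneEquation

theorem linearizedCoeff_apply_self (f u : E2 → ℝ) (x q : E2) :
    linearizedCoeff f u x q q = Hess f (∇ u x) q := by
  simp [Hess, iteratedFDeriv_two_apply, linearizedCoeff]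

theorem abs_pd_le_norm_gradient (u : E2 → ℝ) (i : Fin 2) (x : E2) : |pd u i x| ≤ ‖∇ u x‖ := by
  simpa [pd, ee, norm_gradient] using (fderiv ℝ u x).le_opNorm (ee i)

theorem exists_arsinh_sq_mul_hess_le {f u : E2 → ℝ} {lam m K : ℝ} (hlam : 0 ≤ lam)
    (hgrow : ∀ p q : E2, Hess f p q ≤ lam * (log (2 + ‖p‖) / (1 + ‖p‖)) * ‖q‖ ^ 2)
    (hm0 : 0 ≤ m) (hm1 : m < 1) (hK : 0 ≤ K)
    (hbd : ∀ x : E2, |pd u 0 x| ≤ K * (|pd u 1 x| ^ m + 1)) :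
    ∃ M, ∀ x q : E2,
      arsinh (pd u 0 x) ^ 2 * Hess f (∇ u x) q ≤ M * deriv arsinh (pd u 0 x) * ‖q‖ ^ 2 := by
  obtain ⟨M, hM⟩ := exists_arsinh_sq_mul_log_div_le hm0 hm1 (L := 2 * K) (by positivity)
  refine ⟨M * lam, fun x q => ?_⟩
  have h_one_le : 1 ≤ 1 + ‖∇ u x‖ := by simp
  have h_sublinear : |pd u 0 x| ≤ 2 * K * (1 + ‖∇ u x‖) ^ m := by
    calc |pd u 0 x| ≤ K * (|pd u 1 x| ^ m + 1) := hbd x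
      _ ≤ K * ((1 + ‖∇ u x‖) ^ m + (1 + ‖∇ u x‖) ^ m) := by
        gcongr
        · linarith [abs_pd_le_norm_gradient u 1 x]
        · exact one_le_rpow h_one_le hm0
      _ = 2 * K * (1 + ‖∇ u x‖) ^ m := by ring
  have h_weight := hM _ _ h_one_le h_sublinear
  rw [← add_assoc, one_add_one_eq_two] at h_weight
  calc arsinh (pd u 0 x) ^ 2 * Hess f (∇ u x) q
      ≤ arsinh (pd u 0 x) ^ 2 * (lam * (log (2 + ‖∇ u x‖) / (1 + ‖∇ u x‖)) * ‖q‖ ^ 2) := by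
        gcongr
        exact hgrow _ q
    _ = arsinh (pd u 0 x) ^ 2 * (log (2 + ‖∇ u x‖) / (1 + ‖∇ u x‖)) * (lam * ‖q‖ ^ 2) := by ring
    _ ≤ M * deriv arsinh (pd u 0 x) * (lam * ‖q‖ ^ 2) := by gcongr
    _ = M * lam * deriv arsinh (pd u 0 x) * ‖q‖ ^ 2 := by ring

end PlaneEquation

theorem statement0 (f u : E2 → ℝ)
    (hf : ContDiff ℝ 2 f)
    (hpos : ∀ p q : E2, q ≠ 0 → 0 < Hess f p q)
    (lam : ℝ) (hlam : 0 < lam)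
    (hgrow : ∀ p q : E2, Hess f p q ≤ lam * (Real.log (2 + ‖p‖) / (1 + ‖p‖)) * ‖q‖ ^ 2)
    (hu : ContDiff ℝ 2 u) (heq : solves f u)
    (m K : ℝ) (hm0 : 0 ≤ m) (hm1 : m < 1) (hK : 0 < K)
    (hbd : ∀ x : E2, |pd u 0 x| ≤ K * (|pd u 1 x| ^ m + 1)) :
    ∃ a b c : ℝ, ∀ x : E2, u x = a * x 0 + b * x 1 + c := by
  simp only [solves, ee, ← EuclideanSpace.basisFun_apply] at heq
  have hB_pos : ∀ x q, q ≠ 0 → 0 < linearizedCoeff f u x q q := fun x q hq =>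
    (linearizedCoeff_apply_self f u x q).symm ▸ hpos _ q hq
  have hB_nonneg : ∀ x q, 0 ≤ linearizedCoeff f u x q q := fun x q => by
    rcases eq_or_ne q 0 with rfl | hq
    · simp
    · exact (hB_pos x q hq).le
  have hweak : IsWeakSolution volume (linearizedCoeff f u) (pd u 0) :=
    isWeakSolution_linearizedCoeff volume (EuclideanSpace.basisFun (Fin 2) ℝ) hf hu heq (ee 0)
  obtain ⟨M, hM⟩ := exists_arsinh_sq_mul_hess_le hlam.le hgrow hm0 hm1 hK.le hbd
  simp only [← linearizedCoeff_apply_self] at hM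
  have h_energy := hweak.bilin_gradient_eq_zero finrank_euclideanSpace_fin
    (continuous_linearizedCoeff hf (hu.of_le one_le_two)) (linearizedCoeff_comm hf) hB_nonneg
    ((hu.fderiv_right (m := 1) (by norm_num)).clm_apply contDiff_const) contDiff_arsinh
    (fun t => deriv_arsinh t ▸ by positivity) hM
  have h_pd₀ : ∀ x, ∇ (pd u 0) x = 0 := fun x => by
    by_contra h
    exact (hB_pos x _ h).ne' (h_energy x)
  have h_hess := fderiv_gradient_eq_zero_of_gradient_fderiv_apply_eq_zero
    (EuclideanSpace.basisFun (Fin 2) ℝ) hf hB_pos hu heq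
    (by simpa only [EuclideanSpace.basisFun_apply] using! h_pd₀)
  refine ⟨∇ u 0 0, ∇ u 0 1, u 0, fun x => ?_⟩
  rw [eq_inner_add_of_fderiv_gradient_eq_zero hu h_hess x, PiLp.inner_apply, Fin.sum_univ_two]
  simp [mul_comm]
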